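/- For nonempty sets $X \subseteq \mathbb{R}^m$, $Y \subseteq \mathbb{R}^n$ and a function $h : \mathbb{R}^m \to \mathbb{R}$, write $X \trianglelefteq^h Y := \{(x, h(x)\,y) : x \in X,\ y \in Y\} \subseteq \mathbb{R}^m \times \mathbb{R}^n$ (the scaled extension of $X$ with $Y$ via $h$). Let $X \subseteq \mathbb{R}^m$ and $Y \subseteq \mathbb{R}^n$ be nonempty compact sets, let $h : \mathbb{R}^m \to \mathbb{R}$ be given by $h(x) = \langle a, x\rangle + b$ with $h(x) \ge 0$ for all $x \in X$, and let $Z = X \trianglelefteq^h Y$. Fix $T \ge 1$, points $x^1,\dots,x^T \in X$ and $y^1,\dots,y^T \in Y$, and loss vectors $\ell_x^1,\dots,\ell_x^T \in \mathbb{R}^m$ and $\ell_y^1,\dots,\ell_y^T \in \mathbb{R}^n$. Define the modified losses $\tilde\ell_x^t := \ell_x^t + \langle \ell_y^t, y^t\rangle\, a$, the points $z^t := (x^t, h(x^t)\, y^t)$, the cumulative regrets $$R_X^T := \sum_{t=1}^T \langle \tilde\ell_x^t, x^t\rangle - \min_{\hat x \in X} \sum_{t=1}^T \langle \tilde\ell_x^t,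 \hat x\rangle, \qquad R_Y^T := \sum_{t=1}^T \langle \ell_y^t, y^t\rangle - \min_{\hat y \in Y} \sum_{t=1}^T \langle \ell_y^t, \hat y\rangle,$$ $$R_Z^T := \sum_{t=1}^T \langle (\ell_x^t, \ell_y^t), z^t\rangle - \min_{\hat z \in Z} \sum_{t=1}^T \langle (\ell_x^t, \ell_y^t), \hat z\rangle,$$ and $h^* := \max_{x \in X} h(x)$. Then $z^t \in Z$ for every $t$, and $$R_Z^T \le R_X^T + \max_{\hat x \in X} \{ h(\hat x)\, R_Y^T \}.$$ In particular, if $R_Y^T \ge 0$, then $$R_Z^T \le R_X^T + h^* R_Y^T.$$ -/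

import Mathlib

/-- The scaled extension of `X ⊆ ℝ^m` with `Y ⊆ ℝ^n` via `h : ℝ^m → ℝ`,
namely `X ⊴^h Y = {(x, h(x) • y) : x ∈ X, y ∈ Y}`. -/
def scaledExt {m n : ℕ} (X : Set (Fin m → ℝ)) (Y : Set (Fin n → ℝ))
    (h : (Fin m → ℝ) → ℝ) : Set ((Fin m → ℝ) × (Fin n → ℝ)) :=
  {p | ∃ x ∈ X, ∃ y ∈ Y, p = (x, h x • y)}

/-- The Euclidean inner product on `ℝ^m × ℝ^n`:
`⟨(u, v), (x, y)⟩ = ⟨u, x⟩ + ⟨v, y⟩`. -/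
def prodDot {m n : ℕ} (l z : (Fin m → ℝ) × (Fin n → ℝ)) : ℝ :=
  dotProduct l.1 z.1 + dotProduct l.2 z.2

/-- The cumulative regret of the decisions `z^1, …, z^T` against the linear losses
`l^1, …, l^T` over the set `S`, with respect to the inner product `ip`:
`∑_t ⟨l^t, z^t⟩ - min_{ẑ ∈ S} ∑_t ⟨l^t, ẑ⟩`.
The minimum is written as an infimum; it is attained when `S` is nonempty and compact
and `ip` is continuous. -/
noncomputable def cumRegret {E : Type*} (ip : E → E → ℝ) (S : Set E) {T : ℕ}
    (l z : Fin T → E) : ℝ :=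
  (∑ t, ip (l t) (z t)) - sInf ((fun zhat => ∑ t, ip (l t) zhat) '' S)

/-- On a compact set, the learner's loss minus the loss of any fixed comparator is at most the
cumulative regret. -/
theorem sum_sub_le_cumRegret {k T : ℕ} {S : Set (Fin k → ℝ)} (hS : IsCompact S)
    (l z : Fin T → Fin k → ℝ) {u : Fin k → ℝ} (hu : u ∈ S) :
    (∑ t, dotProduct (l t) (z t)) - ∑ t, dotProduct (l t) u ≤ cumRegret dotProduct S l z := by
  have hcont : Continuous fun v : Fin k → ℝ => ∑ t, dotProduct (l t) v := by fun_prop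
  have hinf : sInf ((fun v => ∑ t, dotProduct (l t) v) '' S) ≤ ∑ t, dotProduct (l t) u :=
    csInf_le (hS.image hcont).bddBelow (Set.mem_image_of_mem _ hu)
  unfold cumRegret
  linarith

/-- A bound on the regret against every fixed comparator bounds the cumulative regret. -/
theorem cumRegret_le {E : Type*} {ip : E → E → ℝ} {S : Set E} (hS : S.Nonempty) {T : ℕ}
    {l z : Fin T → E} {c : ℝ}
    (hc : ∀ u ∈ S, (∑ t, ip (l t) (z t)) - ∑ t, ip (l t) u ≤ c) :
    cumRegret ip S l z ≤ c := by
  have hinf : (∑ t, ip (l t) (z t)) - c ≤ sInf ((fun u => ∑ t, ip (l t) u) '' S) := by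
    refine le_csInf (hS.image _) ?_
    rintro _ ⟨u, hu, rfl⟩
    linarith [hc u hu]
  unfold cumRegret
  linarith

/-- The regret over the scaled extension is at most the regret over `X` under the modified losses
plus any upper bound for `h(u) * R_Y` on `X`. -/
theorem cumRegret_scaledExt_le {m n T : ℕ} {X : Set (Fin m → ℝ)} {Y : Set (Fin n → ℝ)}
    (hXne : X.Nonempty) (hXc : IsCompact X) (hYne : Y.Nonempty) (hYc : IsCompact Y)
    {a : Fin m → ℝ} {b : ℝ} {h : (Fin m → ℝ) → ℝ} (hdef : ∀ x, h x = dotProduct a x + b)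
    (hnn : ∀ x ∈ X, 0 ≤ h x) (x : Fin T → Fin m → ℝ) (y : Fin T → Fin n → ℝ)
    (lx : Fin T → Fin m → ℝ) (ly : Fin T → Fin n → ℝ) {M : ℝ}
    (hM : ∀ u ∈ X, h u * cumRegret dotProduct Y ly y ≤ M) :
    cumRegret prodDot (scaledExt X Y h) (fun t => (lx t, ly t))
        (fun t => (x t, h (x t) • y t)) ≤
      cumRegret dotProduct X (fun t => lx t + dotProduct (ly t) (y t) • a) x + M := by
  obtain ⟨x₀, hx₀⟩ := hXne
  obtain ⟨y₀, hy₀⟩ := hYne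
  have hne : (scaledExt X Y h).Nonempty := ⟨_, x₀, hx₀, y₀, hy₀, rfl⟩
  refine cumRegret_le hne ?_
  rintro _ ⟨u, hu, v, hv, rfl⟩
  have hX := sum_sub_le_cumRegret hXc (fun t => lx t + dotProduct (ly t) (y t) • a) x hu
  have hY := mul_le_mul_of_nonneg_left (sum_sub_le_cumRegret hYc ly y hv) (hnn u hu)
  have hsplit : (∑ t, prodDot (lx t, ly t) (x t, h (x t) • y t)) -
      ∑ t, prodDot (lx t, ly t) (u, h u • v) =
      ((∑ t, dotProduct (lx t + dotProduct (ly t) (y t) • a) (x t)) -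
        ∑ t, dotProduct (lx t + dotProduct (ly t) (y t) • a) u) +
      h u * ((∑ t, dotProduct (ly t) (y t)) - ∑ t, dotProduct (ly t) v) := by
    simp only [← Finset.sum_sub_distrib, Finset.mul_sum, ← Finset.sum_add_distrib]
    refine Finset.sum_congr rfl fun t _ => ?_
    simp only [prodDot, add_dotProduct, smul_dotProduct, dotProduct_smul, smul_eq_mul, hdef]
    ring
  rw [hsplit]
  linarith [hM u hu]

theorem regret_scaledExt_bound {m n : ℕ}
    (X : Set (Fin m → ℝ)) (Y : Set (Fin n → ℝ))
    (hXne : X.Nonempty) (hXc : IsCompact X)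
    (hYne : Y.Nonempty) (hYc : IsCompact Y)
    (a : Fin m → ℝ) (b : ℝ) (h : (Fin m → ℝ) → ℝ)
    (hdef : ∀ x, h x = dotProduct a x + b)
    (hnn : ∀ x ∈ X, 0 ≤ h x)
    (T : ℕ) (hT : 1 ≤ T)
    (x : Fin T → Fin m → ℝ) (y : Fin T → Fin n → ℝ)
    (hx : ∀ t, x t ∈ X) (hy : ∀ t, y t ∈ Y)
    (lx : Fin T → Fin m → ℝ) (ly : Fin T → Fin n → ℝ)
    -- modified losses, observed on the `X` side
    (ltx : Fin T → Fin m → ℝ)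
    (hltx : ∀ t, ltx t = lx t + dotProduct (ly t) (y t) • a)
    -- decisions over the scaled extension
    (z : Fin T → (Fin m → ℝ) × (Fin n → ℝ))
    (hz : ∀ t, z t = (x t, h (x t) • y t))
    -- cumulative regrets
    (RX RY RZ : ℝ)
    (hRX : RX = cumRegret dotProduct X ltx x)
    (hRY : RY = cumRegret dotProduct Y ly y)
    (hRZ : RZ = cumRegret prodDot (scaledExt X Y h) (fun t => (lx t, ly t)) z)
    -- `h* = max_{x ∈ X} h(x)`
    (hstar : ℝ) (hhstar : IsGreatest (h '' X) hstar) :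
    (∀ t, z t ∈ scaledExt X Y h) ∧
    (∃ M : ℝ, IsGreatest ((fun xhat => h xhat * RY) '' X) M ∧ RZ ≤ RX + M) ∧
    (0 ≤ RY → RZ ≤ RX + hstar * RY) := by
  obtain rfl : ltx = fun t => lx t + dotProduct (ly t) (y t) • a := funext hltx
  obtain rfl : z = fun t => (x t, h (x t) • y t) := funext hz
  subst hRX hRY hRZ
  refine ⟨fun t => ⟨x t, hx t, y t, hy t, rfl⟩, ?_, fun hRY => ?_⟩
  · have hcont : Continuous fun u => h u * cumRegret dotProduct Y ly y := by
      simp only [hdef]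
      fun_prop
    obtain ⟨M, hM⟩ := (hXc.image hcont).exists_isGreatest (hXne.image _)
    exact ⟨M, hM, cumRegret_scaledExt_le hXne hXc hYne hYc hdef hnn x y lx ly
      fun u hu => hM.2 (Set.mem_image_of_mem _ hu)⟩
  · exact cumRegret_scaledExt_le hXne hXc hYne hYc hdef hnn x y lx ly fun u hu =>
      mul_le_mul_of_nonneg_right (hhstar.2 (Set.mem_image_of_mem _ hu)) hRY
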